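/- For every natural number m and all real numbers x, y, z, one has Σ_{n=0}^{m} (-1)^n · C(x+y+nz, m-n) · C(y+n(z+1), n) = (z+1) · Σ_{0≤l≤n≤m} (-1)^n · C(n,l) · C(x+1+l, m-n) · (1+z)^{n+l} · (1-z)^{n-l} − z · Σ_{0≤l≤n≤m} (-1)^n · C(n,l) · C(x+l, m-n) · (1+z)^{n+l} · (1-z)^{n-l}. -/

import Mathlib

open Finset PowerSeries

/-- Generalized binomial coefficient `C(x, k) = x(x-1)⋯(x-k+1)/k!` for real `x`. -/
noncomputable def gchoose (x : ℝ) (k : ℕ) : ℝ :=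
  (∏ i ∈ Finset.range k, (x - i)) / (Nat.factorial k)

/-- The binomial series `(1+t)^x = Σ C(x,k) t^k` as a formal power series. -/
noncomputable def binomSeries (x : ℝ) : PowerSeries ℝ :=
  PowerSeries.mk fun k => gchoose x k


lemma gchoose_eq_choose (x : ℝ) (k : ℕ) : gchoose x k = Ring.choose x k := by
  have h := Ring.descPochhammer_eq_factorial_smul_choose x k
  have hk : (Nat.factorial k : ℝ) ≠ 0 := by exact_mod_cast Nat.factorial_ne_zero k
  have h2 : (descPochhammer ℤ k).smeval x = (descPochhammer ℝ k).eval x := by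
    rw [← descPochhammer_map (Int.castRingHom ℝ), Polynomial.eval_map, ← Polynomial.eval₂_smulOneHom_eq_smeval]
    congr 1
    exact Subsingleton.elim _ _
  rw [h2, descPochhammer_eval_eq_prod_range, nsmul_eq_mul] at h
  rw [gchoose, h, mul_div_cancel_left₀ _ hk]

lemma gchoose_eval (x : ℝ) (k : ℕ) :
    gchoose x k = (descPochhammer ℝ k).eval x / (Nat.factorial k) := by
  rw [descPochhammer_eval_eq_prod_range, gchoose]

lemma binomSeries_add (x y : ℝ) : binomSeries (x + y) = binomSeries x * binomSeries y := by
  have key : ∀ x, binomSeries x = PowerSeries.binomialSeries ℝ x := by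
    intro x
    ext n
    simp [binomSeries, gchoose_eq_choose]
  rw [key, key, key, PowerSeries.binomialSeries_add]

lemma binomSeries_nat (d : ℕ) : binomSeries (d : ℝ) = (1 + X) ^ d := by
  have key : ∀ x, binomSeries x = PowerSeries.binomialSeries ℝ x := by
    intro x
    ext n
    simp [binomSeries, gchoose_eq_choose]
  rw [key, PowerSeries.binomialSeries_nat]

lemma coeff_binomSeries (x : ℝ) (k : ℕ) : coeff k (binomSeries x) = gchoose x k := by
  simp [binomSeries]

/-- the `m`-th finite difference of `C(y + n a, m)` -/
lemma alt_sum_gchoose (m : ℕ) (y a : ℝ) :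
    ∑ n ∈ Finset.range (m + 1), (-1 : ℝ) ^ n * (m.choose n : ℝ) * gchoose (y + n * a) m
      = (-a) ^ m := by
  by_cases ha : a = 0
  · subst ha
    have h := Int.alternating_sum_range_choose (n := m)
    have h' : ∑ n ∈ Finset.range (m + 1), (-1 : ℝ) ^ n * (m.choose n : ℝ)
        = if m = 0 then 1 else 0 := by
      exact_mod_cast congrArg (Int.cast : ℤ → ℝ) h
    simp only [mul_zero, add_zero]
    rw [← Finset.sum_mul, h']
    by_cases hm : m = 0
    · subst hm
      simp [gchoose]
    · simp [hm]
  · set P : Polynomial ℝ := (descPochhammer ℝ m).comp (Polynomial.C a * Polynomial.X) with hP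
    have hd : P.natDegree = m := by
      rw [hP, Polynomial.natDegree_comp, descPochhammer_natDegree,
        Polynomial.natDegree_C_mul_X a ha, mul_one]
    have hl : P.leadingCoeff = a ^ m := by
      rw [hP, Polynomial.leadingCoeff_comp, (monic_descPochhammer ℝ m).leadingCoeff,
        descPochhammer_natDegree, Polynomial.leadingCoeff_C_mul_X, one_mul]
      rw [Polynomial.natDegree_C_mul_X a ha]
      exact one_ne_zero
    have h := congrFun (Polynomial.fwdDiff_iter_degree_eq_factorial P) (y / a)
    rw [fwdDiff_iter_eq_sum_shift, hd, hl] at h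
    have hf : (Nat.factorial m : ℝ) ≠ 0 := by exact_mod_cast Nat.factorial_ne_zero m
    have e : ∀ n : ℕ, gchoose (y + n * a) m = P.eval (y / a + n • (1 : ℝ)) / Nat.factorial m := by
      intro n
      rw [gchoose_eval, hP, Polynomial.eval_comp]
      congr 2
      simp
      field_simp
    have h2 : (∑ n ∈ Finset.range (m + 1),
        (-1 : ℝ) ^ (m - n) * (m.choose n : ℝ) * P.eval (y / a + n • (1 : ℝ)))
        = a ^ m * Nat.factorial m := by
      simpa using h
    calc _ = ∑ n ∈ Finset.range (m + 1), (-1 : ℝ) ^ m * (((-1 : ℝ) ^ (m - n) *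
          (m.choose n : ℝ) * P.eval (y / a + n • (1 : ℝ))) / Nat.factorial m) := by
          refine Finset.sum_congr rfl fun n hn => ?_
          have hn' : n ≤ m := Nat.lt_succ_iff.mp (Finset.mem_range.mp hn)
          rw [e]
          have : (-1 : ℝ) ^ m * (-1 : ℝ) ^ (m - n) = (-1) ^ n := by
            rw [← pow_add, show m + (m - n) = 2 * (m - n) + n by omega, pow_add, pow_mul]
            simp
          rw [← this]
          ring
      _ = _ := by
          rw [← Finset.mul_sum, ← Finset.sum_div, h2, mul_div_cancel_right₀ _ hf, ← mul_pow]
          simp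

lemma base_sum (m : ℕ) (y z : ℝ) :
    ∑ n ∈ Finset.range (m + 1),
        (-1 : ℝ) ^ n * gchoose (y + n * z) (m - n) * gchoose (y + n * (z + 1)) n
      = (-(z + 1)) ^ m := by
  rw [← alt_sum_gchoose m y (z + 1)]
  refine Finset.sum_congr rfl fun n hn => ?_
  have hn' : n ≤ m := Nat.lt_succ_iff.mp (Finset.mem_range.mp hn)
  have h := Ring.choose_smul_choose (y + n * (z + 1)) hn'
  simp only [gchoose_eq_choose]
  rw [nsmul_eq_mul, show y + n * (z + 1) - n = y + n * z by ring] at h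
  rw [mul_assoc, mul_assoc, h]
  ring

/-- the series `1 / (1 + a t)` -/
noncomputable def geomI (a : ℝ) : PowerSeries ℝ := PowerSeries.mk fun k => (-a) ^ k

lemma geomI_mul (a : ℝ) : geomI a * (1 + C a * X) = 1 := by
  ext n
  rw [mul_add, mul_one, ← mul_assoc, map_add]
  cases n with
  | zero => simp [geomI]
  | succ n =>
    rw [coeff_succ_mul_X, coeff_mul_C]
    simp [geomI, pow_succ]

lemma lhs_eq (m : ℕ) (x y z : ℝ) :
    ∑ n ∈ Finset.range (m + 1),
        (-1 : ℝ) ^ n * gchoose (x + y + n * z) (m - n) * gchoose (y + n * (z + 1)) n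
      = coeff m (binomSeries x * geomI (z + 1)) := by
  set H : PowerSeries ℝ := ∑ n ∈ Finset.range (m + 1),
    C ((-1 : ℝ) ^ n * gchoose (y + n * (z + 1)) n) * (X ^ n * binomSeries (y + n * z)) with hH
  have h1 : ∀ j ≤ m, coeff j H = coeff j (geomI (z + 1)) := by
    intro j hj
    rw [geomI, coeff_mk, ← base_sum j y z, hH, map_sum]
    symm
    have hsub : Finset.range (j + 1) ⊆ Finset.range (m + 1) :=
      Finset.range_subset_range.mpr (by omega)
    rw [← Finset.sum_subset hsub]
    · refine Finset.sum_congr rfl fun n hn => ?_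
      have hn' : n ≤ j := Nat.lt_succ_iff.mp (Finset.mem_range.mp hn)
      rw [coeff_C_mul, coeff_X_pow_mul', if_pos hn', coeff_binomSeries]
      ring
    · intro n _ hn
      have hn' : ¬ n ≤ j := fun h => hn (Finset.mem_range.mpr (by omega))
      rw [coeff_C_mul, coeff_X_pow_mul', if_neg hn', mul_zero]
  have h2 : coeff m (binomSeries x * geomI (z + 1)) = coeff m (binomSeries x * H) := by
    rw [coeff_mul, coeff_mul]
    refine Finset.sum_congr rfl fun p hp => ?_
    rw [h1 p.2 (by have := Finset.HasAntidiagonal.mem_antidiagonal.mp hp; omega)]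
  rw [h2, hH, Finset.mul_sum, map_sum]
  refine Finset.sum_congr rfl fun n hn => ?_
  have hn' : n ≤ m := Nat.lt_succ_iff.mp (Finset.mem_range.mp hn)
  rw [show binomSeries x * (C ((-1 : ℝ) ^ n * gchoose (y + n * (z + 1)) n) *
      (X ^ n * binomSeries (y + n * z))) = C ((-1 : ℝ) ^ n * gchoose (y + n * (z + 1)) n) *
      (X ^ n * (binomSeries x * binomSeries (y + n * z))) by ring,
    ← binomSeries_add, coeff_C_mul, coeff_X_pow_mul', if_pos hn', coeff_binomSeries, ← add_assoc]
  ring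

lemma double_eq (m : ℕ) (x z : ℝ) :
    ∑ n ∈ Finset.range (m + 1), ∑ l ∈ Finset.range (n + 1),
            (-1 : ℝ) ^ n * (n.choose l : ℝ) * gchoose (x + l) (m - n) *
              (1 + z) ^ (n + l) * (1 - z) ^ (n - l)
      = coeff m (binomSeries x * ∑ n ∈ Finset.range (m + 1),
          (X * (-(C (1 + z)) * (C (1 + z) * (1 + X) + C (1 - z)))) ^ n) := by
  rw [Finset.mul_sum, map_sum]
  refine Finset.sum_congr rfl fun n hn => ?_
  have hn' : n ≤ m := Nat.lt_succ_iff.mp (Finset.mem_range.mp hn)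
  rw [mul_pow, mul_pow, add_pow, Finset.mul_sum, Finset.mul_sum, Finset.mul_sum, map_sum]
  refine Finset.sum_congr rfl fun l _ => ?_
  have : binomSeries x * (X ^ n * ((-(C (1 + z))) ^ n * ((C (1 + z) * (1 + X)) ^ l *
      C (1 - z) ^ (n - l) * (n.choose l : PowerSeries ℝ)))) =
      C ((-1 : ℝ) ^ n * (n.choose l : ℝ) * (1 + z) ^ (n + l) * (1 - z) ^ (n - l)) *
      (X ^ n * (binomSeries x * (1 + X) ^ l)) := by
    simp only [map_mul, map_pow, map_neg, map_one, map_natCast]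
    rw [neg_pow (C (1 + z)), mul_pow, pow_add]
    ring
  rw [this, ← binomSeries_nat, ← binomSeries_add, coeff_C_mul, coeff_X_pow_mul', if_pos hn',
    coeff_binomSeries]
  ring

theorem sum_eq_double_sum_combination (m : ℕ) (x y z : ℝ) :
    ∑ n ∈ Finset.range (m + 1),
        (-1 : ℝ) ^ n * gchoose (x + y + n * z) (m - n) * gchoose (y + n * (z + 1)) n =
      (z + 1) * ∑ n ∈ Finset.range (m + 1), ∑ l ∈ Finset.range (n + 1),
            (-1 : ℝ) ^ n * (n.choose l : ℝ) * gchoose (x + 1 + l) (m - n) *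
              (1 + z) ^ (n + l) * (1 - z) ^ (n - l) -
        z * ∑ n ∈ Finset.range (m + 1), ∑ l ∈ Finset.range (n + 1),
            (-1 : ℝ) ^ n * (n.choose l : ℝ) * gchoose (x + l) (m - n) *
              (1 + z) ^ (n + l) * (1 - z) ^ (n - l) := by
  rw [lhs_eq, double_eq, double_eq]
  set q : PowerSeries ℝ := X * (-(C (1 + z)) * (C (1 + z) * (1 + X) + C (1 - z))) with hq
  set G : PowerSeries ℝ := ∑ n ∈ Finset.range (m + 1), q ^ n with hG
  have hx : binomSeries (x + 1) = binomSeries x * (1 + X) := by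
    have := binomSeries_nat 1
    rw [Nat.cast_one, pow_one] at this
    rw [binomSeries_add, this]
  have hgeom : G * (1 - q) = 1 - q ^ (m + 1) := by
    rw [hG, geom_sum_mul_neg]
  have hq1 : 1 - q = (1 + C (z + 1) * X) ^ 2 := by
    rw [hq]
    simp only [map_add, map_sub, map_one]
    ring
  have hI := geomI_mul (z + 1)
  have e : C (z + 1) * (binomSeries (x + 1) * G) - C z * (binomSeries x * G)
      = binomSeries x * geomI (z + 1) - X ^ (m + 1) * (binomSeries x * geomI (z + 1) *
        (-(C (1 + z)) * (C (1 + z) * (1 + X) + C (1 - z))) ^ (m + 1)) := by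
    have e1 : C (z + 1) * (binomSeries (x + 1) * G) - C z * (binomSeries x * G)
        = binomSeries x * (G * (1 + C (z + 1) * X)) := by
      rw [hx]
      simp only [map_add, map_one]
      ring
    have e2 : G * (1 + C (z + 1) * X) = geomI (z + 1) * (1 - q ^ (m + 1)) := by
      rw [← hgeom, hq1]
      linear_combination (-(G * (1 + C (z + 1) * X))) * hI
    rw [e1, e2, hq, mul_pow]
    ring
  have e3 := congrArg (coeff m) e
  rw [map_sub, map_sub, coeff_C_mul, coeff_C_mul, coeff_X_pow_mul', if_neg (by omega),
    sub_zero] at e3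
  exact e3.symm
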